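/- arXiv:0707.3104 — 5 statements merged into one kernel-verified Lean document; each statement's English description precedes it below -/
import Mathlib

section
/- Let m ≥ 1 and 0 ≤ l ≤ m be integers. Then the 2-adic valuation of A_{l,m} is given by ν₂(A_{l,m}) = ν₂((m+1−l)·(m+2−l)⋯(m+l)) + l, where the product (m+1−l)_{2l} has 2l consecutive factors starting at m+1−l. Equivalently, stated without the division by 2^{m−l}: ν₂(l! · m! · b_{l,m}) = (m − l) + l + ν₂((m+l)!/(m−l)!). -/
/-- The sequence `b_{l,m}` from the paper. -/
def blm (l m : ℕ) : ℕ :=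
  ∑ k ∈ Finset.Icc l m,
    2 ^ k * Nat.choose (2 * m - 2 * k) (m - k) * Nat.choose (m + k) m * Nat.choose k l

/-!
The numbers `b_{l,m}` are the coefficients of `∑ k, 2 ^ k C(2m-2k, m-k) C(m+k, m) (a + 1) ^ k`,
which is `4 ^ m` times the Boros–Moll polynomial. The ratio of consecutive coefficients of this sum
is rational in `k`, so the polynomial solves a second order differential equation, and comparing
coefficients of `a ^ l` gives `(m - l)(m + l + 1) x_l = (2m + 1) x_{l+1} - x_{l+2}` for
`x_l = l! m! b_{l,m}`. Write `x_l = 2 ^ m · (m + l)! / (m - l)! · u_l`. Then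
`u_l = (2m + 1) u_{l+1} - (m - l - 1)(m + l + 2) u_{l+2}` with `u_m = 1` and `u_{m+1} = 0`, and
since `(m - l - 1)(m + l + 2)` is even, all `u_l` with `l ≤ m` are odd.
-/

open Finset Polynomial

open scoped Nat

section General

variable {R : Type*}

theorem coeff_X_mul_derivative [CommSemiring R] (p : R[X]) (k : ℕ) :
    (X * derivative p).coeff k = k * p.coeff k := by
  cases k with
  | zero => simp
  | succ k => rw [coeff_X_mul, coeff_derivative, mul_comm, Nat.cast_succ]

theorem coeff_X_sq_mul_derivative_derivative [CommRing R] (p : R[X]) (k : ℕ) :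
    (X ^ 2 * derivative (derivative p)).coeff k = k * (k - 1) * p.coeff k := by
  have h : X ^ 2 * derivative (derivative p) =
      X * derivative (X * derivative p) - X * derivative p := by
    rw [derivative_mul, derivative_X]
    ring
  rw [h, coeff_sub]
  simp only [coeff_X_mul_derivative]
  ring

theorem derivative_taylor [CommSemiring R] (r : R) (p : R[X]) :
    derivative (taylor r p) = taylor r (derivative p) := by
  simp [taylor_apply, derivative_comp]

theorem exists_odd_eq_mul_prod_mul [CommRing R] [IsDomain R] {p d : R} {q x : ℕ → R} {n l : ℕ}
    (hp : Odd p) (hq : ∀ i, Even (q i)) (hq₀ : ∀ i < n, q i ≠ 0)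
    (hrec : ∀ i < n, q i * x i = p * x (i + 1) - x (i + 2))
    (hxn : x n = d * ∏ i ∈ range n, q i)
    (hxn' : d * ∏ i ∈ range (n + 1), q i ∣ x (n + 1)) (hl : l ≤ n) :
    ∃ u, Odd u ∧ x l = d * (∏ i ∈ range l, q i) * u := by
  suffices ∃ u v, Odd u ∧ x l = d * (∏ i ∈ range l, q i) * u ∧
      x (l + 1) = d * (∏ i ∈ range (l + 1), q i) * v by
    obtain ⟨u, -, hu, hxl, -⟩ := this
    exact ⟨u, hu, hxl⟩
  induction hl using Nat.decreasingInduction with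
  | self =>
    obtain ⟨v, hv⟩ := hxn'
    exact ⟨1, v, odd_one, by rw [hxn, mul_one], hv⟩
  | of_succ i hi ih =>
    obtain ⟨u, v, hu, hxi, hxi'⟩ := ih
    refine ⟨p * u - q (i + 1) * v, u, (hp.mul hu).sub_even ((hq _).mul_right v), ?_, hxi⟩
    apply mul_left_cancel₀ (hq₀ i hi)
    rw [hrec i hi, hxi', prod_range_succ _ (i + 1), hxi, prod_range_succ]
    ring

end General

/-- The coefficient of `(a + 1) ^ k` in `4 ^ m P_m(a)`, for the Boros–Moll polynomial `P_m`. -/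
def borosMollCoeff (m k : ℕ) : ℕ :=
  2 ^ k * (m - k).centralBinom * (m + k).choose m

/-- The Boros–Moll polynomial `P_m`, scaled to `4 ^ m P_m` so that its coefficients are integers, in
the variable `a + 1`, in which they have a closed form; `taylor 1` returns to the variable `a`. -/
noncomputable def borosMoll (m : ℕ) : ℤ[X] :=
  ∑ k ∈ range (m + 1), monomial k (borosMollCoeff m k : ℤ)

theorem borosMollCoeff_succ_mul {m k : ℕ} (hk : k < m) :
    ((k : ℤ) + 1) * (2 * m - 1 - 2 * k) * borosMollCoeff m (k + 1) =
      (m - k) * (m + k + 1) * borosMollCoeff m k := by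
  obtain ⟨n, rfl⟩ := Nat.exists_eq_add_of_lt hk
  have hcentral := Nat.succ_mul_centralBinom_succ n
  have hchoose := Nat.choose_mul_succ_eq (k + n + 1 + k) (k + n + 1)
  rw [show k + n + 1 + k + 1 - (k + n + 1) = k + 1 by omega] at hchoose
  unfold borosMollCoeff
  rw [show k + n + 1 - (k + 1) = n by omega, show k + n + 1 - k = n + 1 by omega, ← add_assoc]
  zify at hcentral hchoose
  push_cast
  linear_combination
    -2 ^ k * ((k + n + 1 + k).choose (k + n + 1) : ℤ) * (2 * k + n + 2) * hcentral -
      2 ^ (k + 1) * (n.centralBinom : ℤ) * (2 * n + 1) * hchoose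

theorem coeff_borosMoll (m k : ℕ) :
    (borosMoll m).coeff k = if k ≤ m then (borosMollCoeff m k : ℤ) else 0 := by
  simp [borosMoll, coeff_monomial]

theorem coeff_borosMoll_succ_mul (m k : ℕ) :
    ((k : ℤ) + 1) * (2 * m - 1 - 2 * k) * (borosMoll m).coeff (k + 1) =
      (m - k) * (m + k + 1) * (borosMoll m).coeff k := by
  simp only [coeff_borosMoll]
  rcases lt_trichotomy k m with hk | rfl | hk
  · rw [if_pos (Nat.succ_le_of_lt hk), if_pos hk.le, borosMollCoeff_succ_mul hk]
  · simp
  · rw [if_neg (by omega), if_neg (by omega), mul_zero, mul_zero]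

theorem borosMoll_ode (m : ℕ) :
    (X ^ 2 - C 2 * X) * derivative (derivative (borosMoll m)) +
        (C 2 * X + C (2 * m - 1 : ℤ)) * derivative (borosMoll m) =
      C (m * (m + 1) : ℤ) * borosMoll m := by
  ext k
  simp only [sub_mul, add_mul, mul_assoc, coeff_add, coeff_sub, coeff_C_mul,
    coeff_X_sq_mul_derivative_derivative, coeff_X_mul_derivative, coeff_derivative]
  linear_combination coeff_borosMoll_succ_mul m k

theorem taylor_borosMoll_ode (m : ℕ) :
    (X ^ 2 - 1) * derivative (derivative (taylor 1 (borosMoll m))) +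
        (C 2 * X + C (2 * m + 1 : ℤ)) * derivative (taylor 1 (borosMoll m)) =
      C (m * (m + 1) : ℤ) * taylor 1 (borosMoll m) := by
  have h := congrArg (taylor 1) (borosMoll_ode m)
  simp only [map_add, map_sub, map_one, taylor_one, taylor_mul, taylor_pow, taylor_X, taylor_C,
    ← derivative_taylor] at h
  rw [← h, C_add, C_1, show (C 2 : ℤ[X]) = 2 from rfl]
  ring

theorem coeff_taylor_borosMoll (m l : ℕ) : (taylor 1 (borosMoll m)).coeff l = blm l m := by
  have hsum : (taylor 1 (borosMoll m)).coeff l =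
      ∑ k ∈ range (m + 1), (borosMollCoeff m k * k.choose l : ℤ) := by
    simp [borosMoll, coeff_X_add_one_pow]
  rw [hsum, blm, Nat.cast_sum]
  symm
  apply sum_subset_zero_on_sdiff
  · intro k hk
    simp only [mem_Icc, mem_range] at hk ⊢
    omega
  · intro k hk
    simp only [mem_sdiff, mem_range, mem_Icc] at hk
    rw [Nat.choose_eq_zero_of_lt (by omega), Nat.cast_zero, mul_zero]
  · intro k _
    rw [borosMollCoeff, Nat.centralBinom, Nat.mul_sub]
    push_cast
    rfl

theorem blm_recurrence (m l : ℕ) :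
    ((m : ℤ) - l) * (m + l + 1) * blm l m =
      (2 * m + 1) * ((l + 1) * blm (l + 1) m) - (l + 1) * (l + 2) * blm (l + 2) m := by
  have h := congrArg (coeff · l) (taylor_borosMoll_ode m)
  simp only [sub_mul, add_mul, one_mul, mul_assoc, coeff_add, coeff_sub, coeff_C_mul,
    coeff_X_sq_mul_derivative_derivative, coeff_X_mul_derivative, coeff_derivative,
    coeff_taylor_borosMoll] at h
  push_cast at h
  linear_combination -h

theorem factorial_mul_blm_recurrence (m l : ℕ) :
    ((m : ℤ) - l) * (m + l + 1) * (l ! * m ! * blm l m : ℕ) =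
      (2 * m + 1) * ((l + 1)! * m ! * blm (l + 1) m : ℕ) -
        ((l + 2)! * m ! * blm (l + 2) m : ℕ) := by
  rw [Nat.factorial_succ (l + 1), Nat.factorial_succ l]
  push_cast
  linear_combination (l ! * m ! : ℤ) * blm_recurrence m l

theorem blm_self (m : ℕ) : blm m m = 2 ^ m * m.centralBinom := by
  simp [blm, Nat.centralBinom, two_mul]

theorem blm_eq_zero_of_lt {l m : ℕ} (h : m < l) : blm l m = 0 := by
  rw [blm, Icc_eq_empty_of_lt h, sum_empty]

theorem prod_range_sub_mul_add_eq_descFactorial (m l : ℕ) :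
    ∏ i ∈ range l, ((m : ℤ) - i) * (m + i + 1) = (m + l).descFactorial (2 * l) := by
  induction l with
  | zero => simp
  | succ l ih =>
    rw [prod_range_succ, ih, ← add_assoc, show 2 * (l + 1) = 2 * l + 1 + 1 from rfl,
      Nat.succ_descFactorial_succ, Nat.cast_mul,
      ← descPochhammer_eval_eq_descFactorial ℤ _ (2 * l + 1), descPochhammer_succ_eval,
      descPochhammer_eval_eq_descFactorial]
    push_cast
    ring

theorem factorial_mul_blm_self (m : ℕ) :
    m ! * m ! * blm m m = 2 ^ m * (m + m).descFactorial (2 * m) := by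
  rw [blm_self, ← two_mul, Nat.descFactorial_self, Nat.centralBinom, two_mul,
    ← Nat.add_choose_mul_factorial_mul_factorial m m]
  ring

theorem exists_odd_factorial_mul_blm {m l : ℕ} (hl : l ≤ m) :
    ∃ c : ℕ, Odd c ∧ l ! * m ! * blm l m = 2 ^ m * (m + l).descFactorial (2 * l) * c := by
  have heven (i : ℕ) : Even (((m : ℤ) - i) * (m + i + 1)) := by
    rw [Int.even_mul]
    grind
  have hne (i : ℕ) (hi : i < m) : ((m : ℤ) - i) * (m + i + 1) ≠ 0 :=
    mul_ne_zero (by omega) (by omega)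
  have htop : ((m ! * m ! * blm m m : ℕ) : ℤ) =
      2 ^ m * ∏ i ∈ range m, ((m : ℤ) - i) * (m + i + 1) := by
    rw [factorial_mul_blm_self, prod_range_sub_mul_add_eq_descFactorial]
    push_cast
    rfl
  obtain ⟨u, hu, h⟩ := exists_odd_eq_mul_prod_mul (x := fun i ↦ ((i ! * m ! * blm i m : ℕ) : ℤ))
    (odd_two_mul_add_one _) heven hne (fun i _ ↦ factorial_mul_blm_recurrence m i) htop
    (by simp [blm_eq_zero_of_lt]) hl
  refine ⟨u.natAbs, hu.natAbs, ?_⟩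
  rw [prod_range_sub_mul_add_eq_descFactorial] at h
  simpa [Int.natAbs_mul, Int.natAbs_pow] using congrArg Int.natAbs h

/-- ν₂(l!·m!·b_{l,m}) = (m − l) + l + ν₂((m+l)!/(m−l)!), i.e.
ν₂(A_{l,m}) = ν₂((m+1−l)_{2l}) + l. -/
theorem nu2_A_pochhammer (m l : ℕ) (hm : 1 ≤ m) (hl : l ≤ m) :
    padicValNat 2 (Nat.factorial l * Nat.factorial m * blm l m) =
      (m - l) + l + padicValNat 2 (Nat.factorial (m + l) / Nat.factorial (m - l)) := by
  obtain ⟨c, hc, h⟩ := exists_odd_factorial_mul_blm hl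
  have hle : 2 * l ≤ m + l := by omega
  have hdesc : (m + l).descFactorial (2 * l) = (m + l)! / (m - l)! := by
    rw [Nat.descFactorial_eq_div hle, show m + l - 2 * l = m - l by omega]
  have hdesc₀ : (m + l).descFactorial (2 * l) ≠ 0 := (Nat.descFactorial_pos.2 hle).ne'
  rw [h, padicValNat.mul (by positivity) hc.pos.ne', padicValNat.mul (by positivity) hdesc₀,
    padicValNat.prime_pow, padicValNat.eq_zero_of_not_dvd hc.not_two_dvd_nat, add_zero,
    Nat.sub_add_cancel hl, hdesc]
end

section
/- Let n ≥ 1 and k be integers with 1 ≤ k ≤ 2^n. Then ν₂(S(2^n + 1, k + 1)) = s₂(k) − 1. -/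
/-- Stirling numbers of the second kind, via the recurrence
`S(n+1,k+1) = S(n,k) + (k+1)·S(n,k+1)`. -/
def stirling2 : ℕ → ℕ → ℕ
  | 0, 0 => 1
  | 0, _ + 1 => 0
  | _ + 1, 0 => 0
  | n + 1, k + 1 => stirling2 n k + (k + 1) * stirling2 n (k + 1)

/-!
Since `Δ^k (x ^ N) (0) = k! S(N, k)`, Legendre's formula reduces the theorem to the following claim
for `N = 2 ^ n`: the numbers `u k = 2 Δ^k (x ^ N) (0) / 2 ^ k` are integers, odd for `1 ≤ k ≤ N` and
even otherwise. Indeed `2 k! S(N + 1, k + 1) = 2 ^ k (u k + 2 u (k + 1))`.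

The claim is proved by squaring `x ^ N`. Modulo `4`, only the first two terms of the Leibniz rule
for `Δ^k (f * f)` survive the rescaling, so that squaring replaces `u k` by half of
`(u ⋆ u) k + 2 k (u' ⋆ u') (k - 1)`, where `⋆` is the binomial convolution and `u'` the shifted
sequence. The shift is a derivation for `⋆`, hence `(u ⋆ u)' = 2 (u' ⋆ u)`: halving is harmless, the
new parities depend on the old ones only, and every `v ⋆ v` is even away from the index `0`. For the
indicator `χ` of `[1, N]` one has `χ' = χ + δ₀ + δ_N` modulo `2`, so `χ' ⋆ χ` is `χ` plus its
translate by `N` multiplied by `k.choose N`, which by Lucas' theorem has the parity of `k / N`.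
-/

open Finset fwdDiff

section BinomialConvolution

variable {R S : Type*} [CommSemiring R] [CommSemiring S]

/-- The binomial (Hurwitz) convolution of two sequences, i.e. the coefficients of the product of
their exponential generating functions `∑ u k * X ^ k / k!`. -/
def binomialConv (u v : ℕ → R) (k : ℕ) : R :=
  ∑ p ∈ antidiagonal k, k.choose p.1 * (u p.1 * v p.2)

theorem binomialConv_zero (u v : ℕ → R) : binomialConv u v 0 = u 0 * v 0 := by
  simp [binomialConv]

theorem binomialConv_comm (u v : ℕ → R) : binomialConv u v = binomialConv v u := by
  funext k
  rw [binomialConv, ← Nat.sum_antidiagonal_swap]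
  refine sum_congr rfl fun p hp => ?_
  rw [Prod.fst_swap, Prod.snd_swap, Nat.choose_symm_of_eq_add (mem_antidiagonal.mp hp).symm,
    mul_comm (u _)]

theorem binomialConv_add_left (u v w : ℕ → R) :
    binomialConv (u + v) w = binomialConv u w + binomialConv v w := by
  funext k
  simp only [binomialConv, Pi.add_apply, add_mul, mul_add, sum_add_distrib]

theorem binomialConv_single_one (m : ℕ) (v : ℕ → R) (k : ℕ) :
    binomialConv (Pi.single m 1) v k = k.choose m * v (k - m) := by
  rw [binomialConv, Nat.sum_antidiagonal_eq_sum_range_succ_mk]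
  rcases le_or_gt m k with hm | hm
  · rw [sum_eq_single_of_mem m (mem_range_succ_iff.mpr hm)]
    · simp
    · intro i _ hi
      simp [Pi.single_eq_of_ne hi]
  · rw [Nat.choose_eq_zero_of_lt hm, Nat.cast_zero, zero_mul]
    refine sum_eq_zero fun i hi => ?_
    simp [Pi.single_eq_of_ne (show i ≠ m by grind)]

theorem map_binomialConv (φ : R →+* S) (u v : ℕ → R) (k : ℕ) :
    φ (binomialConv u v k) = binomialConv (φ ∘ u) (φ ∘ v) k := by
  simp [binomialConv]

/-- Shifting a sequence differentiates its exponential generating function. -/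
theorem binomialConv_succ (u v : ℕ → R) (k : ℕ) :
    binomialConv u v (k + 1) =
      binomialConv (fun i => u (i + 1)) v k + binomialConv u (fun i => v (i + 1)) k := by
  have h := sum_antidiagonal_choose_succ_nsmul (fun i j => u i * v j) k
  simp only [nsmul_eq_mul] at h
  rw [binomialConv, h, add_comm]
  refine congrArg (· + _) (sum_congr rfl fun p hp => ?_)
  rw [Nat.choose_symm_of_eq_add (mem_antidiagonal.mp hp).symm]

theorem binomialConv_self_succ (u : ℕ → R) (k : ℕ) :
    binomialConv u u (k + 1) = 2 * binomialConv (fun i => u (i + 1)) u k := by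
  rw [binomialConv_succ, binomialConv_comm u, two_mul]

theorem binomialConv_self_of_charTwo [CharP R 2] (u : ℕ → R) :
    binomialConv u u = Pi.single 0 (u 0 ^ 2) := by
  funext k
  cases k with
  | zero => rw [binomialConv_zero, Pi.single_eq_same, sq]
  | succ k => rw [binomialConv_self_succ, CharTwo.two_eq_zero, zero_mul,
      Pi.single_eq_of_ne k.succ_ne_zero]

theorem sum_antidiagonal_mul_two_pow_mul_of_charTwo [CharP R 2] (a b : ℕ × ℕ → R) (k : ℕ) :
    ∑ p ∈ antidiagonal k, a p * (2 ^ p.1 * b p) = a (0, k) * b (0, k) := by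
  simp_rw [CharTwo.two_eq_zero, zero_pow_eq]
  cases k <;> simp [Nat.sum_antidiagonal_succ]

end BinomialConvolution

section ForwardDifference

variable {M R : Type*} [AddCommMonoid M] [CommRing R] (h : M)

theorem fwdDiff_iter_succ_mul (f g : M → R) (k : ℕ) :
    Δ_[h] ^[k + 1] (f * g) =
      Δ_[h] ^[k] (Δ_[h] f * g) + Δ_[h] ^[k] (f * Δ_[h] g) + Δ_[h] ^[k] (Δ_[h] f * Δ_[h] g) := by
  rw [Function.iterate_succ_apply, ← smul_eq_mul f g, fwdDiff_smul, fwdDiff_iter_add,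
    fwdDiff_iter_add]
  rfl

/-- Expands the `k`-th power of `Δ(fg) = Δf · g + f · Δg + Δf · Δg`; `p.1` counts the factors in
which the last summand is chosen. -/
theorem fwdDiff_iter_mul (f g : M → R) (k : ℕ) (x : M) :
    Δ_[h] ^[k] (f * g) x = ∑ p ∈ antidiagonal k, k.choose p.1 *
      binomialConv (fun i => Δ_[h] ^[p.1 + i] f x) (fun i => Δ_[h] ^[p.1 + i] g x) p.2 := by
  induction k generalizing f g with
  | zero => simp [binomialConv_zero]
  | succ k ih =>
    have pascal := sum_antidiagonal_choose_succ_nsmul (fun r m =>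
      binomialConv (fun i => Δ_[h] ^[r + i] f x) (fun i => Δ_[h] ^[r + i] g x) m) k
    simp only [nsmul_eq_mul] at pascal
    rw [pascal, fwdDiff_iter_succ_mul, Pi.add_apply, Pi.add_apply, ih, ih, ih, ← sum_add_distrib]
    refine congrArg₂ (· + ·) (sum_congr rfl fun p _ => ?_) (sum_congr rfl fun p hp => ?_)
    · rw [binomialConv_succ, mul_add]
      rfl
    · rw [Nat.choose_symm_of_eq_add (mem_antidiagonal.mp hp).symm]
      simp only [Nat.add_right_comm p.1 1]
      rfl

theorem fwdDiff_iter_mul_of_rescaled {f g : M → R} {u v : ℕ → R} {a b c : R} {x : M}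
    (hu : ∀ k, a * Δ_[h] ^[k] f x = c ^ k * u k) (hv : ∀ k, b * Δ_[h] ^[k] g x = c ^ k * v k)
    (k : ℕ) :
    a * b * Δ_[h] ^[k] (f * g) x = c ^ k * ∑ p ∈ antidiagonal k, k.choose p.1 *
      (c ^ p.1 * binomialConv (fun i => u (p.1 + i)) (fun i => v (p.1 + i)) p.2) := by
  simp only [fwdDiff_iter_mul, binomialConv, mul_sum]
  refine sum_congr rfl fun p hp => sum_congr rfl fun q hq => ?_
  rw [← mem_antidiagonal.mp hp, ← mem_antidiagonal.mp hq]
  linear_combination ((p.1 + (q.1 + q.2)).choose p.1 * (q.1 + q.2).choose q.1 : R) *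
    (hu (p.1 + q.1) * (b * Δ_[h] ^[p.1 + q.2] g x) +
      c ^ (p.1 + q.1) * u (p.1 + q.1) * hv (p.1 + q.2))

theorem fwdDiff_iter_succ_id_mul (f : R → R) (k : ℕ) (x : R) :
    Δ_[1] ^[k + 1] (id * f) x = x * Δ_[1] ^[k + 1] f x + (k + 1) * Δ_[1] ^[k] f (x + 1) := by
  induction k generalizing x with
  | zero =>
    simp only [zero_add, Function.iterate_one, Function.iterate_zero_apply, fwdDiff, Pi.mul_apply,
      id_eq, Nat.cast_zero]
    ring
  | succ k ih =>
    rw [Function.iterate_succ_apply', fwdDiff, ih, ih]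
    simp only [Function.iterate_succ_apply', fwdDiff]
    push_cast
    ring

theorem fwdDiff_iter_pow_zero (n k : ℕ) :
    Δ_[1] ^[k] (fun x : R => x ^ n) 0 = k.factorial * n.stirlingSecond k := by
  induction n generalizing k with
  | zero =>
    cases k with
    | zero => simp
    | succ k => rw [fwdDiff_iter_pow_eq_zero_of_lt k.succ_pos]; simp
  | succ n ih =>
    cases k with
    | zero => simp
    | succ k =>
      have hpow : (fun x : R => x ^ (n + 1)) = id * fun x => x ^ n := by
        funext x
        exact pow_succ' x n
      have hshift : Δ_[1] ^[k] (fun x : R => x ^ n) (0 + 1) =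
          Δ_[1] ^[k] (fun x : R => x ^ n) 0 + Δ_[1] ^[k + 1] (fun x : R => x ^ n) 0 := by
        rw [Function.iterate_succ_apply', fwdDiff]
        ring
      rw [hpow, fwdDiff_iter_succ_id_mul, hshift, ih, ih, Nat.stirlingSecond_succ_succ,
        Nat.factorial_succ]
      push_cast
      ring

end ForwardDifference

/-- The rescaled Newton coefficients `2 * Δ^k f(0) / 2 ^ k` of `f` at `0` are integers, with
residues `ε k` modulo `2`. -/
def HasNewtonParity (f : ℤ → ℤ) (ε : ℕ → ZMod 2) : Prop :=
  ∀ k, ∃ u : ℤ, 2 * Δ_[1] ^[k] f 0 = 2 ^ k * u ∧ (u : ZMod 2) = ε k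

theorem two_mul_fwdDiff_iter_succ_mul_self {f : ℤ → ℤ} {u : ℕ → ℤ}
    (hu : ∀ k, 2 * Δ_[1] ^[k] f 0 = 2 ^ k * u k) (k : ℕ) :
    2 * Δ_[1] ^[k + 1] (f * f) 0 = 2 ^ (k + 1) * (binomialConv (fun i => u (i + 1)) u k +
      ∑ p ∈ antidiagonal k, (k + 1).choose (p.1 + 1) * (2 ^ p.1 *
        binomialConv (fun i => u (p.1 + 1 + i)) (fun i => u (p.1 + 1 + i)) p.2)) := by
  refine mul_left_cancel₀ (two_ne_zero (α := ℤ)) ?_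
  rw [← mul_assoc, fwdDiff_iter_mul_of_rescaled 1 hu hu (k + 1), mul_left_comm,
    Nat.sum_antidiagonal_succ, mul_add (2 : ℤ), mul_sum _ _ (2 : ℤ)]
  refine congrArg (2 ^ (k + 1) * · : ℤ → ℤ) (congrArg₂ (· + ·) ?_ (sum_congr rfl fun p _ => ?_))
  · simpa using binomialConv_self_succ u k
  · ring

theorem HasNewtonParity.mul_self {f : ℤ → ℤ} {ε η : ℕ → ZMod 2} (hf : HasNewtonParity f ε)
    (hη_zero : η 0 = 0)
    (hη_succ : (fun k => η (k + 1)) = binomialConv (fun i => ε (i + 1)) ε + Pi.single 0 (ε 1)) :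
    HasNewtonParity (f * f) η := by
  choose u hu huε using hf
  obtain rfl : Int.castRingHom (ZMod 2) ∘ u = ε := funext huε
  rintro (_ | k)
  · exact ⟨2 * f 0 ^ 2, by simp [sq], by simp [hη_zero, CharTwo.two_eq_zero]⟩
  · refine ⟨_, two_mul_fwdDiff_iter_succ_mul_self hu k, ?_⟩
    have diagonal : ((k + 1 : ℕ) : ZMod 2) * (Pi.single 0 ((u 1 : ZMod 2) ^ 2) : ℕ → ZMod 2) k =
        (Pi.single 0 (u 1 : ZMod 2) : ℕ → ZMod 2) k := by
      cases k <;> simp [ZMod.pow_card]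
    rw [congrFun hη_succ k]
    simp only [← Int.coe_castRingHom, map_add, map_sum, map_mul, map_pow, map_ofNat,
      map_binomialConv, binomialConv_self_of_charTwo,
      sum_antidiagonal_mul_two_pow_mul_of_charTwo]
    simpa [Function.comp_def] using diagonal

theorem indicator_Icc_one_succ {N : ℕ} (hN : 1 ≤ N) :
    (fun k => (Set.Icc 1 N).indicator (1 : ℕ → ZMod 2) (k + 1)) =
      (Set.Icc 1 N).indicator 1 + Pi.single 0 1 + Pi.single N 1 := by
  funext k
  simp only [Set.indicator_apply, Set.mem_Icc, Pi.add_apply, Pi.single_apply, Pi.one_apply]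
  grind [CharTwo.add_self_eq_zero (1 : ZMod 2)]

theorem choose_prime_pow_modEq_div (p n k : ℕ) [Fact p.Prime] :
    k.choose (p ^ n) ≡ k / p ^ n [MOD p] := by
  induction n generalizing k with
  | zero => simp [Nat.ModEq.refl]
  | succ n ih =>
    have lucas := Choose.choose_modEq_choose_mod_mul_choose_div_nat (n := k) (k := p ^ (n + 1))
      (p := p)
    rw [pow_succ', Nat.mul_mod_right, Nat.choose_zero_right, one_mul,
      Nat.mul_div_cancel_left _ (Fact.out : p.Prime).pos] at lucas
    rw [pow_succ', ← Nat.div_div_eq_div_mul]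
    exact lucas.trans (ih _)

theorem choose_two_pow_mul_indicator_Icc (n k : ℕ) :
    (k.choose (2 ^ n) * (Set.Icc 1 (2 ^ n)).indicator 1 (k - 2 ^ n) : ZMod 2) =
      (Set.Ioo (2 ^ n) (2 ^ (n + 1))).indicator 1 k := by
  rw [(ZMod.natCast_eq_natCast_iff _ _ _).mpr (choose_prime_pow_modEq_div 2 n k), pow_succ]
  generalize hN : 2 ^ n = N
  have hN_pos : 0 < N := hN ▸ Nat.two_pow_pos n
  simp only [Set.indicator_apply, Set.mem_Icc, Set.mem_Ioo, Pi.one_apply]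
  by_cases hk : N < k ∧ k < N * 2
  · have hdiv : k / N = 1 := Nat.div_eq_of_lt_le (by omega) (by omega)
    rw [hdiv, Nat.cast_one, one_mul, if_pos (by omega), if_pos hk]
  · by_cases hk2 : k = N * 2
    · have hdiv : k / N = 2 := by simp [hk2, hN_pos]
      simp [hdiv, hk, CharTwo.two_eq_zero]
    · rw [if_neg (by omega), if_neg hk, mul_zero]

theorem indicator_Icc_two_pow_succ (n : ℕ) :
    (fun k => (Set.Icc 1 (2 ^ (n + 1))).indicator (1 : ℕ → ZMod 2) (k + 1)) =
      binomialConv (fun i => (Set.Icc 1 (2 ^ n)).indicator 1 (i + 1))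
        ((Set.Icc 1 (2 ^ n)).indicator 1) +
      Pi.single 0 ((Set.Icc 1 (2 ^ n)).indicator 1 1) := by
  funext k
  simp only [indicator_Icc_one_succ Nat.one_le_two_pow, binomialConv_add_left,
    binomialConv_self_of_charTwo, Pi.add_apply, binomialConv_single_one,
    choose_two_pow_mul_indicator_Icc]
  simp only [Set.indicator_apply, Set.mem_Icc, Set.mem_Ioo, Pi.single_apply, Pi.one_apply,
    Nat.choose_zero_right, Nat.cast_one, one_mul, tsub_zero]
  grind [Nat.one_le_two_pow (n := n)]

theorem hasNewtonParity_pow_two_pow (n : ℕ) :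
    HasNewtonParity (fun x => x ^ 2 ^ n) ((Set.Icc 1 (2 ^ n)).indicator 1) := by
  induction n with
  | zero =>
    rintro (_ | _ | k)
    · exact ⟨0, by simp⟩
    · exact ⟨1, by simp [fwdDiff]⟩
    · refine ⟨0, ?_, by simp⟩
      rw [fwdDiff_iter_pow_eq_zero_of_lt (by simp)]
      simp
  | succ n ih =>
    have hpow : (fun x : ℤ => x ^ 2 ^ (n + 1)) = (fun x => x ^ 2 ^ n) * fun x => x ^ 2 ^ n := by
      funext x
      simp [pow_succ, pow_mul]
    rw [hpow]
    exact ih.mul_self (by simp) (indicator_Icc_two_pow_succ n)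

theorem padicValNat_two_eq_digits_sum_sub_one {k m w : ℕ} (hw : Odd w)
    (h : 2 * (k.factorial * m) = 2 ^ k * w) : padicValNat 2 m = (Nat.digits 2 k).sum - 1 := by
  have hw_ne : w ≠ 0 := hw.pos.ne'
  have hm : m ≠ 0 := by
    rintro rfl
    simp [hw_ne] at h
  have hval := congrArg (padicValNat 2) h
  rw [padicValNat.mul two_ne_zero (mul_ne_zero k.factorial_ne_zero hm),
    padicValNat.mul k.factorial_ne_zero hm, padicValNat.mul (by positivity) hw_ne,
    padicValNat.prime_pow, padicValNat_self,
    padicValNat.eq_zero_of_not_dvd hw.not_two_dvd_nat] at hval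
  have legendre := sub_one_mul_padicValNat_factorial (p := 2) k
  have digits_sum_le := Nat.digit_sum_le 2 k
  omega

theorem stirling2_eq_stirlingSecond : stirling2 = Nat.stirlingSecond := by
  funext n k
  induction n generalizing k with
  | zero => cases k <;> simp [stirling2]
  | succ n ih => cases k <;> simp [stirling2, Nat.stirlingSecond_succ_succ, ih, add_comm]

/-- ν₂(S(2ⁿ+1, k+1)) = s₂(k) − 1 for 1 ≤ k ≤ 2ⁿ. -/
theorem nu2_stirling_pow_two_succ (n k : ℕ) (hn : 1 ≤ n) (hk : 1 ≤ k) (hk' : k ≤ 2 ^ n) :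
    padicValNat 2 (stirling2 (2 ^ n + 1) (k + 1)) = (Nat.digits 2 k).sum - 1 := by
  obtain ⟨u, hu, hu_parity⟩ := hasNewtonParity_pow_two_pow n k
  obtain ⟨v, hv, -⟩ := hasNewtonParity_pow_two_pow n (k + 1)
  rw [fwdDiff_iter_pow_zero] at hu hv
  have hu_odd : Odd u := by
    rw [← ZMod.intCast_eq_one_iff_odd, hu_parity]
    simp [hk, hk']
  have hS : 2 * (k.factorial * (2 ^ n + 1).stirlingSecond (k + 1) : ℤ) = 2 ^ k * (u + 2 * v) := by
    rw [Nat.factorial_succ] at hv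
    rw [Nat.stirlingSecond_succ_succ]
    push_cast at hv ⊢
    linear_combination hu + hv
  rw [stirling2_eq_stirlingSecond]
  refine padicValNat_two_eq_digits_sum_sub_one (hu_odd.add_even (even_two_mul v)).natAbs ?_
  simpa [Int.natAbs_mul, Int.natAbs_pow] using congrArg Int.natAbs hS
end

section
/- Let m ≥ 1 and N be integers with N ≥ m + 2. Then the integer S(N + 2^m, 5) − 5^{2^m} · S(N, 5) has 2-adic valuation exactly m − 1, that is, ν₂( S(N + 2^m, 5) − 5^{2^m} · S(N, 5) ) = m − 1. -/
/-!
In the explicit formula `k! S(n,k) = ∑ (-1)^(k-i) C(k,i) i^n`, passing from `S(N,k)` to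
`S(N+t,k) - k^t S(N,k)` multiplies the `i`-th term by `i^t - k^t` and so removes the top one.
For `k = 5` and even `t`, lifting the exponent gives the `i = 1` term `5 (1 - 5^t)` the valuation
`ν₂(t) + 2` and the `i = 3` term a larger one, while the terms with `i` even are divisible by
`2^(N+1)`. Hence the term `i = 1` dominates, and dividing by `5! = 8 · 15` leaves `ν₂(t) - 1`.
-/

open Finset
open scoped Nat

lemma cast_mul_choose_succ (k i : ℕ) :
    (i * (k + 1).choose i : ℤ) = (k + 1) * ((k + 1).choose i - k.choose i) := by
  cases i with
  | zero => simp
  | succ i =>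
    have absorption := Nat.add_one_mul_choose_eq k i
    have pascal := Nat.choose_succ_succ' k i
    zify at absorption pascal
    rw [pascal, add_sub_cancel_right, absorption, pascal]
    push_cast
    ring

theorem factorial_mul_stirling2 (n k : ℕ) :
    (k ! * stirling2 n k : ℤ) = ∑ i ∈ range (k + 1), (-1) ^ (k + i) * k.choose i * (i : ℤ) ^ n := by
  induction n generalizing k with
  | zero =>
    simp only [pow_zero, mul_one, pow_add, mul_assoc, ← mul_sum, Int.alternating_sum_range_choose]
    cases k <;> simp [stirling2]
  | succ n ih =>
    cases k with
    | zero => simp [stirling2]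
    | succ k =>
      have lower : -(k ! * stirling2 n k : ℤ) =
          ∑ i ∈ range (k + 2), (-1) ^ (k + 1 + i) * k.choose i * (i : ℤ) ^ n := by
        rw [sum_range_succ, Nat.choose_succ_self, ih, ← sum_neg_distrib]
        simp only [Nat.cast_zero, mul_zero, zero_mul, add_zero]
        exact sum_congr rfl fun i _ ↦ by ring
      calc ((k + 1)! * stirling2 (n + 1) (k + 1) : ℤ)
          = (k + 1) * ((k + 1)! * stirling2 n (k + 1) - -(k ! * stirling2 n k)) := by
            rw [stirling2, Nat.factorial_succ]
            push_cast
            ring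
        _ = ∑ i ∈ range (k + 2), (-1) ^ (k + 1 + i) *
              ((k + 1) * ((k + 1).choose i - k.choose i)) * (i : ℤ) ^ n := by
            rw [ih, lower, ← sum_sub_distrib, mul_sum]
            exact sum_congr rfl fun i _ ↦ by ring
        _ = ∑ i ∈ range (k + 2), (-1) ^ (k + 1 + i) * (k + 1).choose i * (i : ℤ) ^ (n + 1) :=
            sum_congr rfl fun i _ ↦ by rw [← cast_mul_choose_succ]; ring

theorem factorial_mul_stirling2_shift (n t k : ℕ) :
    (k ! * (stirling2 (n + t) k - k ^ t * stirling2 n k) : ℤ) =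
      ∑ i ∈ range k, (-1) ^ (k + i) * k.choose i * (i : ℤ) ^ n * (i ^ t - k ^ t) := by
  calc (k ! * (stirling2 (n + t) k - k ^ t * stirling2 n k) : ℤ)
      = k ! * stirling2 (n + t) k - k ^ t * (k ! * stirling2 n k) := by ring
    _ = ∑ i ∈ range (k + 1), (-1) ^ (k + i) * k.choose i * (i : ℤ) ^ n * (i ^ t - k ^ t) := by
        rw [factorial_mul_stirling2, factorial_mul_stirling2, mul_sum, ← sum_sub_distrib]
        exact sum_congr rfl fun i _ ↦ by ring
    _ = _ := by rw [sum_range_succ, sub_self, mul_zero, add_zero]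

lemma emultiplicity_two_pow_sub_pow_add_one {x y : ℤ} {t : ℕ} (hx : Odd x) (hy : Odd y)
    (ht : Even t) (ht₀ : t ≠ 0) :
    emultiplicity 2 (x ^ t - y ^ t) + 1 = padicValNat 2 t + emultiplicity 2 (x ^ 2 - y ^ 2) := by
  have not_two_dvd : ¬ 2 ∣ x := by rwa [← even_iff_two_dvd, Int.not_even_iff_odd]
  rw [Int.two_pow_sub_pow (hx.sub_odd hy).two_dvd not_two_dvd ht, sq_sub_sq,
    emultiplicity_mul Int.prime_two, padicValNat_eq_emultiplicity ht₀, ← Int.natCast_emultiplicity,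
    Nat.cast_two, add_comm]

lemma emultiplicity_two_one_sub_five_pow {t : ℕ} (ht : Even t) (ht₀ : t ≠ 0) :
    emultiplicity (2 : ℤ) (1 - 5 ^ t) = padicValNat 2 t + 2 := by
  have lifting := emultiplicity_two_pow_sub_pow_add_one odd_one (y := 5) (by decide) ht ht₀
  have base : emultiplicity (2 : ℤ) (1 ^ 2 - 5 ^ 2) = 3 :=
    emultiplicity_eq_of_dvd_of_not_dvd (k := 3) (by norm_num) (by norm_num)
  rw [base, one_pow, show (3 : ℕ∞) = 2 + 1 from rfl, ← add_assoc] at lifting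
  exact WithTop.add_right_cancel ENat.one_ne_top lifting

lemma two_pow_dvd_three_pow_sub_five_pow {t : ℕ} (ht : Even t) (ht₀ : t ≠ 0) :
    (2 : ℤ) ^ (padicValNat 2 t + 3) ∣ 3 ^ t - 5 ^ t := by
  have lifting :=
    emultiplicity_two_pow_sub_pow_add_one (x := 3) (y := 5) (by decide) (by decide) ht ht₀
  have base : emultiplicity (2 : ℤ) (3 ^ 2 - 5 ^ 2) = 4 :=
    emultiplicity_eq_of_dvd_of_not_dvd (k := 4) (by norm_num) (by norm_num)
  rw [base, show (4 : ℕ∞) = 3 + 1 from rfl, ← add_assoc] at lifting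
  exact pow_dvd_of_le_emultiplicity (WithTop.add_right_cancel ENat.one_ne_top lifting).ge

lemma two_pow_dvd_stirling2_five_shift_sub {t N : ℕ} (ht : Even t) (ht₀ : t ≠ 0)
    (hN : padicValNat 2 t + 2 ≤ N) :
    (2 : ℤ) ^ (padicValNat 2 t + 3) ∣
      120 * (stirling2 (N + t) 5 - 5 ^ t * stirling2 N 5) - 5 * (1 - 5 ^ t) := by
  have expansion : (120 * (stirling2 (N + t) 5 - 5 ^ t * stirling2 N 5) - 5 * (1 - 5 ^ t) : ℤ) =
      10 * 3 ^ N * (3 ^ t - 5 ^ t) -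
        2 ^ (N + 1) * (5 * (2 ^ t - 5 ^ t) + 5 * 2 ^ (N - 1) * (4 ^ t - 5 ^ t)) := by
    obtain ⟨N, rfl⟩ := Nat.exists_eq_add_of_le' (show 1 ≤ N by lia)
    have formula := factorial_mul_stirling2_shift (N + 1) t 5
    have four_pow : (4 : ℤ) ^ (N + 1) = 2 ^ (N + 2) * 2 ^ N := by
      rw [show (4 : ℤ) = 2 * 2 by norm_num, mul_pow]; ring
    norm_num [sum_range_succ, Nat.factorial, Nat.choose] at formula
    rw [formula, four_pow, Nat.add_sub_cancel]
    ring
  rw [expansion]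
  exact dvd_sub ((two_pow_dvd_three_pow_sub_five_pow ht ht₀).mul_left _)
    ((pow_dvd_pow 2 (by lia)).mul_right _)

theorem emultiplicity_stirling2_five_shift_add_one {t N : ℕ} (ht : Even t) (ht₀ : t ≠ 0)
    (hN : padicValNat 2 t + 2 ≤ N) :
    emultiplicity (2 : ℤ) (stirling2 (N + t) 5 - 5 ^ t * stirling2 N 5) + 1 = padicValNat 2 t := by
  set D : ℤ := stirling2 (N + t) 5 - 5 ^ t * stirling2 N 5
  have leading : emultiplicity (2 : ℤ) (5 * (1 - 5 ^ t)) = padicValNat 2 t + 2 := by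
    rw [emultiplicity_mul Int.prime_two, emultiplicity_eq_zero.2 (by norm_num), zero_add,
      emultiplicity_two_one_sub_five_pow ht ht₀]
  have dominated : emultiplicity (2 : ℤ) (5 * (1 - 5 ^ t)) <
      emultiplicity 2 (120 * D - 5 * (1 - 5 ^ t)) := by
    refine lt_of_lt_of_le ?_
      (le_emultiplicity_of_pow_dvd (two_pow_dvd_stirling2_five_shift_sub ht ht₀ hN))
    rw [leading]
    exact_mod_cast Nat.lt_succ_self _
  have total : emultiplicity (2 : ℤ) (120 * D) = padicValNat 2 t + 2 := by
    rw [← leading, ← emultiplicity_add_of_gt dominated, sub_add_cancel]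
  have factorial_five : emultiplicity (2 : ℤ) 120 = 3 :=
    emultiplicity_eq_of_dvd_of_not_dvd (k := 3) (by norm_num) (by norm_num)
  rw [emultiplicity_mul Int.prime_two, factorial_five, add_comm,
    show (3 : ℕ∞) = 1 + 2 from rfl, ← add_assoc] at total
  exact WithTop.add_right_cancel (ENat.natCast_ne_top 2) total

theorem nu2_stirling_shift_general {t N : ℕ} (ht : Even t) (ht₀ : t ≠ 0)
    (hN : padicValNat 2 t + 2 ≤ N) :
    padicValInt 2 ((stirling2 (N + t) 5 : ℤ) - 5 ^ t * (stirling2 N 5 : ℤ)) =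
      padicValNat 2 t - 1 := by
  have valuation := emultiplicity_stirling2_five_shift_add_one ht ht₀ hN
  set D : ℤ := stirling2 (N + t) 5 - 5 ^ t * stirling2 N 5
  have hD : D ≠ 0 := by
    rintro hD
    simp [hD] at valuation
  have finite : FiniteMultiplicity 2 D := Int.finiteMultiplicity_iff.2 ⟨by decide, hD⟩
  rw [finite.emultiplicity_eq_multiplicity] at valuation
  rw [padicValInt.of_ne_one_ne_zero (by decide) hD]
  exact Nat.eq_sub_of_add_eq (by exact_mod_cast valuation)

/-- For m ≥ 1 and N ≥ m + 2, ν₂(S(N + 2^m, 5) − 5^{2^m}·S(N, 5)) = m − 1. -/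
theorem nu2_stirling_shift (m N : ℕ) (hm : 1 ≤ m) (hN : m + 2 ≤ N) :
    padicValInt 2 ((stirling2 (N + 2 ^ m) 5 : ℤ) - 5 ^ (2 ^ m) * (stirling2 N 5 : ℤ)) =
      m - 1 := by
  have valuation : padicValNat 2 (2 ^ m) = m := padicValNat.prime_pow m
  simpa only [valuation] using nu2_stirling_shift_general (t := 2 ^ m) (N := N)
    (even_two.pow_of_ne_zero (by lia)) (by positivity) (by rwa [valuation])
end

section
/- For every integer n ≥ 4, the 2-adic valuation of the Stirling number S(n,4) equals 1 if n is odd, and equals 0 if n is even. -/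
/-!
The number `k! · S(n,k)` is the `k`-th forward difference of `x ↦ xⁿ` at `0`: the Leibniz rule
for `x · xⁿ` is the recurrence of the Stirling numbers. Expanding the difference for `k = 4` gives
`6 · S(n,4) + (3ⁿ + 1) = 2ⁿ⁻¹ (2ⁿ⁻¹ + 3)`, whose right-hand side is divisible by `8` for `n ≥ 4`.
The valuation of `S(n,4)` can therefore be read off from `3ⁿ + 1` modulo `8`, which is `4` for odd
`n` and `2` for even `n`.
-/

open Finset
open Nat (stirlingSecond)
open scoped Nat fwdDiff

theorem padicValNat_eq_of_pow_dvd_of_not_pow_succ_dvd {p n k : ℕ}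
    (hdvd : p ^ k ∣ n) (hndvd : ¬p ^ (k + 1) ∣ n) : padicValNat p n = k := by
  have hp : p ≠ 1 := by rintro rfl; simp at hndvd
  have hn : n ≠ 0 := by rintro rfl; simp at hndvd
  rw [padicValNat_def' hp hn, multiplicity_eq_of_dvd_of_not_dvd hdvd hndvd]

theorem padicValNat_two_eq_one_of_modEq_two {n : ℕ} (hn : n ≡ 2 [MOD 4]) :
    padicValNat 2 n = 1 := by
  unfold Nat.ModEq at hn
  exact padicValNat_eq_of_pow_dvd_of_not_pow_succ_dvd (by omega) (by omega)

theorem pow_modEq_one_of_odd_of_even {a n : ℕ} (ha : Odd a) (hn : Even n) :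
    a ^ n ≡ 1 [MOD 8] := by
  obtain ⟨m, rfl⟩ := hn.two_dvd
  have sq_modEq : a ^ 2 ≡ 1 [MOD 8] :=
    ((Nat.modEq_iff_dvd' ha.pow.pos).2 (Nat.eight_dvd_sq_sub_one_of_odd ha)).symm
  simpa [pow_mul] using sq_modEq.pow m

theorem pow_modEq_self_of_odd_of_odd {a n : ℕ} (ha : Odd a) (hn : Odd n) :
    a ^ n ≡ a [MOD 8] := by
  obtain ⟨m, rfl⟩ := hn
  simpa [pow_succ] using (pow_modEq_one_of_odd_of_even ha (even_two_mul m)).mul_right a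

theorem fwdDiff_iter_succ_id_smul {R G : Type*} [Ring R] [AddCommGroup G] [Module R G]
    (h : R) (f : R → G) (k : ℕ) (x : R) :
    Δ_[h] ^[k + 1] (fun y ↦ y • f y) x =
      x • Δ_[h] ^[k + 1] f x + (k + 1) • h • Δ_[h] ^[k] f (x + h) := by
  induction k generalizing x with
  | zero =>
    simp only [Function.iterate_succ_apply, Function.iterate_zero_apply, fwdDiff, add_smul,
      smul_sub, zero_smul, one_smul]
    abel
  | succ k ih =>
    rw [Function.iterate_succ_apply', fwdDiff, ih, ih, Function.iterate_succ_apply' _ (k + 1),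
      Function.iterate_succ_apply' _ k f]
    simp only [fwdDiff, add_smul, smul_sub]
    abel

section ExplicitFormula

variable (R : Type*) [CommRing R]

theorem factorial_mul_stirlingSecond_eq_fwdDiff_iter (n k : ℕ) :
    (k ! * stirlingSecond n k : R) = Δ_[1] ^[k] (fun x : R ↦ x ^ n) 0 := by
  induction n generalizing k with
  | zero =>
    cases k with
    | zero => simp
    | succ k => rw [fwdDiff_iter_pow_eq_zero_of_lt k.succ_pos]; simp
  | succ n ih =>
    cases k with
    | zero => simp
    | succ k =>
      have leibniz : Δ_[1] ^[k + 1] (fun x : R ↦ x ^ (n + 1)) 0 =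
          (k + 1) * Δ_[1] ^[k] (fun x : R ↦ x ^ n) 1 := by
        simpa [-Function.iterate_succ, pow_succ'] using
          fwdDiff_iter_succ_id_smul 1 (fun x : R ↦ x ^ n) k 0
      have shift : Δ_[1] ^[k] (fun x : R ↦ x ^ n) 1 =
          Δ_[1] ^[k + 1] (fun x : R ↦ x ^ n) 0 + Δ_[1] ^[k] (fun x : R ↦ x ^ n) 0 := by
        rw [Function.iterate_succ_apply', fwdDiff, zero_add, sub_add_cancel]
      rw [leibniz, shift, ← ih, ← ih, Nat.stirlingSecond_succ_succ, Nat.factorial_succ]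
      push_cast
      ring

theorem factorial_mul_stirlingSecond_eq_sum (n k : ℕ) :
    (k ! * stirlingSecond n k : R) =
      ∑ i ∈ range (k + 1), (-1) ^ (k - i) * k.choose i * (i : R) ^ n := by
  simp [factorial_mul_stirlingSecond_eq_fwdDiff_iter, fwdDiff_iter_eq_sum_shift]

end ExplicitFormula

theorem six_mul_stirlingSecond_succ_four_add (n : ℕ) :
    6 * stirlingSecond (n + 1) 4 + (3 ^ (n + 1) + 1) = 2 ^ n * (2 ^ n + 3) := by
  have explicit : (24 * stirlingSecond (n + 1) 4 : ℤ) =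
      4 ^ (n + 1) - 4 * 3 ^ (n + 1) + 6 * 2 ^ (n + 1) - 4 := by
    have sum_eq := factorial_mul_stirlingSecond_eq_sum ℤ (n + 1) 4
    norm_num [sum_range_succ, Nat.factorial, Nat.choose_two_right] at sum_eq
    linarith
  have four_pow : (4 : ℤ) ^ n = 2 ^ n * 2 ^ n := by rw [← mul_pow]; norm_num
  rw [pow_succ 4, four_pow, pow_succ 2] at explicit
  zify
  linarith

theorem eight_dvd_six_mul_stirlingSecond_four_add {n : ℕ} (hn : 4 ≤ n) :
    8 ∣ 6 * stirlingSecond n 4 + (3 ^ n + 1) := by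
  obtain ⟨m, rfl⟩ := Nat.exists_eq_add_of_le' hn
  rw [six_mul_stirlingSecond_succ_four_add]
  exact (pow_dvd_pow 2 (Nat.le_add_left 3 m)).mul_right _

theorem stirlingSecond_four_modEq_two_of_odd {n : ℕ} (hn : 4 ≤ n) (hodd : Odd n) :
    stirlingSecond n 4 ≡ 2 [MOD 4] := by
  have dvd := eight_dvd_six_mul_stirlingSecond_four_add hn
  have three_pow : 3 ^ n ≡ 3 [MOD 8] := pow_modEq_self_of_odd_of_odd (by decide) hodd
  unfold Nat.ModEq at three_pow ⊢
  suffices 6 * stirlingSecond n 4 % 8 = 4 by omega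
  omega

theorem odd_stirlingSecond_four_of_even {n : ℕ} (hn : 4 ≤ n) (heven : Even n) :
    Odd (stirlingSecond n 4) := by
  have dvd := eight_dvd_six_mul_stirlingSecond_four_add hn
  have three_pow : 3 ^ n ≡ 1 [MOD 8] := pow_modEq_one_of_odd_of_even (by decide) heven
  unfold Nat.ModEq at three_pow
  rw [Nat.odd_iff]
  suffices 6 * stirlingSecond n 4 % 8 = 6 by omega
  omega

theorem stirling2_eq_stirlingSecond_s5 (n k : ℕ) : stirling2 n k = stirlingSecond n k := by
  fun_induction stirling2 n k with
  | case1 | case2 | case3 => rfl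
  | case4 n k ih₁ ih₂ => rw [ih₁, ih₂, Nat.stirlingSecond_succ_succ, add_comm]

/-- For n ≥ 4, ν₂(S(n,4)) = 1 if n is odd and = 0 if n is even. -/
theorem nu2_stirling_four (n : ℕ) (hn : 4 ≤ n) :
    (Odd n → padicValNat 2 (stirling2 n 4) = 1) ∧
    (Even n → padicValNat 2 (stirling2 n 4) = 0) := by
  rw [stirling2_eq_stirlingSecond_s5]
  exact ⟨fun hodd ↦
      padicValNat_two_eq_one_of_modEq_two (stirlingSecond_four_modEq_two_of_odd hn hodd),
    fun heven ↦ padicValNat.eq_zero_of_not_dvd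
      (odd_stirlingSecond_four_of_even hn heven).not_two_dvd_nat⟩
end

section
/- For every integer i ≥ 1, ν₂(S(8i, 5)) = 1. -/
/-!
The number `k! S(n, k)` is the `k`-th forward difference at `0` of `x ↦ x ^ n`. If `2 ^ (m + 1) ∣ n`
and `k ≤ min n (m + 3)`, then `x ^ n` is congruent modulo `2 ^ k` to the parity of `x`, whose
`k`-th difference at `0` is `(-2) ^ (k - 1)`. Hence `k! S(n, k)` has 2-adic valuation exactly
`k - 1`, and Legendre's formula `ν₂(k!) = k - s₂(k)` leaves `ν₂(S(n, k)) = s₂(k) - 1`, where `s₂`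
is the binary digit sum.
-/

open Function fwdDiff
open scoped Nat

section ForwardDifference

variable {M : Type*} [AddCommMonoid M]

theorem fwdDiff_iter_succ_addMonoidHom_smul {R G : Type*} [Ring R] [AddCommGroup G] [Module R G]
    (ℓ : M →+ R) (f : M → G) (h : M) (k : ℕ) (y : M) :
    Δ_[h] ^[k + 1] (fun x ↦ ℓ x • f x) y =
      ℓ y • Δ_[h] ^[k + 1] f y + (k + 1) • ℓ h • Δ_[h] ^[k] f (y + h) := by
  induction k generalizing y with
  | zero =>
    simp only [zero_add, iterate_one, iterate_zero, id_eq, one_smul, fwdDiff, map_add, add_smul,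
      smul_sub]
    abel
  | succ k ih =>
    rw [iterate_succ_apply', fwdDiff, ih, ih, iterate_succ_apply' _ (k + 1) f, fwdDiff,
      iterate_succ_apply' _ k f]
    simp only [fwdDiff, map_add, add_smul, smul_sub, one_smul]
    abel

theorem fwdDiff_iter_modEq {N : ℤ} {f g : M → ℤ} (hfg : ∀ x, f x ≡ g x [ZMOD N])
    (h : M) (k : ℕ) (y : M) : Δ_[h] ^[k] f y ≡ Δ_[h] ^[k] g y [ZMOD N] := by
  induction k generalizing y with
  | zero => exact hfg y
  | succ k ih =>
    simp only [iterate_succ_apply', fwdDiff]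
    exact (ih (y + h)).sub (ih y)

end ForwardDifference

theorem fwdDiff_iter_succ_mod_two (k x : ℕ) :
    Δ_[1] ^[k + 1] (fun y : ℕ ↦ (y : ℤ) % 2) x = (-2) ^ k * (-1) ^ x := by
  induction k generalizing x with
  | zero =>
    rw [zero_add, iterate_one, fwdDiff, pow_zero, one_mul]
    rcases Nat.even_or_odd x with hx | hx <;> rw [hx.neg_one_pow] <;> grind
  | succ k ih =>
    rw [iterate_succ_apply', fwdDiff, ih, ih]
    ring

theorem factorial_mul_stirling2_eq_fwdDiff_iter (R : Type*) [CommRing R] (n k : ℕ) :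
    (k ! * stirling2 n k : R) = Δ_[1] ^[k] (fun x : ℕ ↦ (x : R) ^ n) 0 := by
  induction n generalizing k with
  | zero =>
    cases k with
    | zero => simp [stirling2]
    | succ k => simp [stirling2, iterate_succ_apply, iterate_fixed (fwdDiff_const 1 (0 : R))]
  | succ n ih =>
    cases k with
    | zero => simp [stirling2]
    | succ k =>
      have leibniz : Δ_[1] ^[k + 1] (fun x : ℕ ↦ (x : R) ^ (n + 1)) 0 =
          (k + 1) * Δ_[1] ^[k] (fun x : ℕ ↦ (x : R) ^ n) 1 := by
        simpa [pow_succ'] using fwdDiff_iter_succ_addMonoidHom_smul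
          (Nat.castAddMonoidHom R) (fun x ↦ (x : R) ^ n) 1 k 0
      have shift : Δ_[1] ^[k] (fun x : ℕ ↦ (x : R) ^ n) 1 =
          Δ_[1] ^[k] (fun x : ℕ ↦ (x : R) ^ n) 0 + Δ_[1] ^[k + 1] (fun x : ℕ ↦ (x : R) ^ n) 0 := by
        simp [iterate_succ_apply', fwdDiff]
      rw [leibniz, shift, ← ih k, ← ih (k + 1), stirling2, Nat.factorial_succ]
      push_cast
      ring

theorem two_pow_dvd_odd_pow_two_pow_sub_one {x : ℤ} (hx : Odd x) (m : ℕ) :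
    2 ^ (m + 3) ∣ x ^ 2 ^ (m + 1) - 1 := by
  induction m with
  | zero => simpa using Int.eight_dvd_sq_sub_one_of_odd hx
  | succ m ih =>
    have factor : x ^ 2 ^ (m + 1 + 1) - 1 = (x ^ 2 ^ (m + 1) - 1) * (x ^ 2 ^ (m + 1) + 1) := by
      ring
    rw [factor, pow_succ 2 (m + 3)]
    exact mul_dvd_mul ih hx.pow.add_one.two_dvd

theorem pow_modEq_mod_two {m n k : ℕ} (hn : 2 ^ (m + 1) ∣ n) (hkm : k ≤ m + 3) (hkn : k ≤ n)
    (x : ℕ) : (x : ℤ) ^ n ≡ (x : ℤ) % 2 [ZMOD 2 ^ k] := by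
  rcases Nat.even_or_odd x with hx | hx
  · have two_dvd : (2 : ℤ) ∣ x := by exact_mod_cast hx.two_dvd
    rw [Int.emod_eq_zero_of_dvd two_dvd, Int.modEq_zero_iff_dvd]
    exact (pow_dvd_pow 2 hkn).trans (pow_dvd_pow_of_dvd two_dvd n)
  · have x_odd : Odd (x : ℤ) := by exact_mod_cast hx
    obtain ⟨r, rfl⟩ := hn
    have base : (x : ℤ) ^ 2 ^ (m + 1) ≡ 1 [ZMOD 2 ^ k] :=
      (Int.modEq_iff_dvd.mpr ((pow_dvd_pow 2 hkm).trans
        (two_pow_dvd_odd_pow_two_pow_sub_one x_odd m))).symm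
    simpa [Int.odd_iff.mp x_odd, pow_mul] using base.pow r

theorem factorial_mul_stirling2_modEq {m n k : ℕ} (hn : 2 ^ (m + 1) ∣ n) (hkm : k + 1 ≤ m + 3)
    (hkn : k + 1 ≤ n) :
    ((k + 1)! * stirling2 n (k + 1) : ℤ) ≡ (-2) ^ k [ZMOD 2 ^ (k + 1)] := by
  have difference_modEq := fwdDiff_iter_modEq (pow_modEq_mod_two hn hkm hkn) 1 (k + 1) 0
  rwa [fwdDiff_iter_succ_mod_two, pow_zero, mul_one,
    ← factorial_mul_stirling2_eq_fwdDiff_iter] at difference_modEq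

theorem emultiplicity_two_eq_of_modEq_neg_two_pow {a : ℤ} {k : ℕ}
    (ha : a ≡ (-2) ^ k [ZMOD 2 ^ (k + 1)]) : emultiplicity 2 a = k := by
  obtain ⟨c, hc⟩ := ha.symm.dvd
  have a_eq : a = 2 ^ k * ((-1) ^ k + 2 * c) := by
    rw [← sub_add_cancel a ((-2) ^ k), hc, neg_pow]
    ring
  have cofactor_odd : Odd ((-1) ^ k + 2 * c) := odd_neg_one.pow.add_even (even_two_mul c)
  rw [a_eq, emultiplicity_mul Int.prime_two, emultiplicity_pow_self_of_prime Int.prime_two,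
    emultiplicity_eq_zero.mpr (by rwa [← even_iff_two_dvd, Int.not_even_iff_odd]), add_zero]

theorem nu2_stirling_five_8i_general {m n k : ℕ} (hn : 2 ^ (m + 1) ∣ n) (hk : 1 ≤ k)
    (hkm : k ≤ m + 3) (hkn : k ≤ n) :
    padicValNat 2 (stirling2 n k) + 1 = (Nat.digits 2 k).sum := by
  obtain ⟨k, rfl⟩ := Nat.exists_eq_add_of_le' hk
  have product_emultiplicity : emultiplicity 2 ((k + 1)! * stirling2 n (k + 1)) = k := by
    have := emultiplicity_two_eq_of_modEq_neg_two_pow (factorial_mul_stirling2_modEq hn hkm hkn)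
    exact_mod_cast this
  have stirling2_ne_zero : stirling2 n (k + 1) ≠ 0 := by
    intro h
    simp [h] at product_emultiplicity
  have product_valuation : padicValNat 2 (k + 1)! + padicValNat 2 (stirling2 n (k + 1)) = k := by
    rw [← padicValNat.mul (Nat.factorial_ne_zero _) stirling2_ne_zero, ← Nat.toNat_emultiplicity,
      product_emultiplicity, ENat.toNat_natCast]
  have legendre : padicValNat 2 (k + 1)! = k + 1 - (Nat.digits 2 (k + 1)).sum := by
    simpa using sub_one_mul_padicValNat_factorial (p := 2) (k + 1)
  have := Nat.digit_sum_le 2 (k + 1)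
  omega

/-- For i ≥ 1, ν₂(S(8i,5)) = 1. -/
theorem nu2_stirling_five_8i (i : ℕ) (hi : 1 ≤ i) :
    padicValNat 2 (stirling2 (8 * i) 5) = 1 := by
  have h := nu2_stirling_five_8i_general (m := 2) (n := 8 * i) (k := 5)
    (Nat.dvd_mul_right 8 i) (by norm_num) (by norm_num) (by omega)
  simpa using h
end
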